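/- arXiv:1904.12298 — 2 statements merged into one kernel-verified Lean document; each statement's English description precedes it below -/
import Mathlib

section
/- Let r ≥ 2 and let m, t be natural numbers with m ∣ t. Consider the action of GL_r(ZMod t) on column vectors in (ZMod m)^r given by matrix multiplication after entrywise reduction along the ring homomorphism ZMod t → ZMod m. Then for any g = (g_1,…,g_r) and h = (h_1,…,h_r) in (ZMod m)^r, there exists A ∈ GL_r(ZMod t) with A·g = h if and only if gcd_m(g_1,…,g_r) = gcd_m(h_1,…,h_r). In other words, the orbit of g under this action is exactly the set of vectors h with gcd_m(h_1,…,h_r) = gcd_m(g_1,…,g_r). -/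
/-- `gcd_m(x_1,…,x_r)`: the gcd of integer representatives of the entries of `x`
together with `m`.  (For `m = 0`, `ZMod 0 = ℤ` and `ZMod.val` is `Int.natAbs`.) -/
def gcdZMod {r m : ℕ} (x : Fin r → ZMod m) : ℕ :=
  Nat.gcd m (Finset.univ.gcd fun i => (x i).val)

/-- The action of `A ∈ GL_r(ZMod t)` on `(ZMod m)^r` (for `m ∣ t`): reduce the
entries of `A` along `ZMod t → ZMod m` and multiply the column vector. -/
def glAction {r m t : ℕ} (hmt : m ∣ t) (A : Matrix.GeneralLinearGroup (Fin r) (ZMod t))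
    (x : Fin r → ZMod m) : Fin r → ZMod m :=
  ((A : Matrix (Fin r) (Fin r) (ZMod t)).map (ZMod.castHom hmt (ZMod m))).mulVec x

/-!
The invariant behind the gcd is the ideal of `ZMod m` spanned by the entries of a vector. Lifting a
vector to `ℤ` and taking the Smith normal form of the submodule it spans, `GL_r(ℤ)` moves it to
`c eᵢ` for any prescribed `i`; working over `ℤ` rather than `ZMod m` makes the matrices used here
invertible modulo `t` as well. If `a` and `b` span the same ideal of `ZMod m` and `i ≠ j`, then two
transvections, which always lift along `ZMod t → ZMod m`, move `a eᵢ` to `b eⱼ`. Reducing the two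
given vectors to different coordinates therefore connects them.
-/

open Matrix Module Set
open scoped MatrixGroups

section Span

variable {ι κ S : Type*} [Semiring S]

theorem span_range_mulVec_le [Fintype ι] (A : Matrix κ ι S) (v : ι → S) :
    Ideal.span (range (A *ᵥ v)) ≤ Ideal.span (range v) := by
  rw [Ideal.span_le]
  rintro _ ⟨i, rfl⟩
  exact sum_mem fun j _ ↦ Ideal.mul_mem_left _ _ (Ideal.subset_span (mem_range_self j))

theorem span_range_units_mulVec [Fintype ι] [DecidableEq ι] (A : (Matrix ι ι S)ˣ) (v : ι → S) :
    Ideal.span (range ((A : Matrix ι ι S) *ᵥ v)) = Ideal.span (range v) := by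
  refine (span_range_mulVec_le _ v).antisymm ?_
  simpa using span_range_mulVec_le (↑A⁻¹ : Matrix ι ι S) ((A : Matrix ι ι S) *ᵥ v)

theorem span_range_single [DecidableEq ι] (i : ι) (a : S) :
    Ideal.span (range (Pi.single i a : ι → S)) = Ideal.span {a} := by
  apply le_antisymm
  · rw [Ideal.span_le]
    rintro _ ⟨j, rfl⟩
    obtain rfl | hj := eq_or_ne j i
    · simp
    · simp [hj]
  · rw [Ideal.span_singleton_le_iff_mem]
    exact Ideal.subset_span ⟨i, by simp⟩

end Span

section Reduction

variable {ι R S T : Type*} [CommRing R] [IsDomain R] [IsPrincipalIdealRing R]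

theorem exists_basis_smul_eq {M : Type*} [Finite ι] [AddCommGroup M] [Module R M]
    (b : Basis ι R M) (i : ι) (x : M) : ∃ (b' : Basis ι R M) (c : R), c • b' i = x := by
  classical
  obtain ⟨n, bM, bN, f, a, hf⟩ := (R ∙ x).smithNormalForm b
  have hn : n ≤ 1 := by
    simpa [finrank_eq_card_basis bN] using finrank_span_le_card (R := R) ({x} : Set M)
  let y : R ∙ x := ⟨x, Submodule.mem_span_singleton_self x⟩
  have hx : ((∑ k, bN.repr y k • bN k : R ∙ x) : M) = x := congrArg Subtype.val (bN.sum_repr y)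
  interval_cases n
  · exact ⟨b, 0, by simpa using hx⟩
  · refine ⟨bM.reindex (Equiv.swap (f 0) i), bN.repr y 0 * a 0, ?_⟩
    simpa [hf, mul_smul] using hx

variable [CommRing S] [CommRing T] [Fintype ι] [DecidableEq ι]

theorem exists_mulVec_eq_single (i : ι) (x : ι → R) :
    ∃ (A : GL ι R) (c : R), (A : Matrix ι ι R) *ᵥ x = Pi.single i c := by
  obtain ⟨b, c, rfl⟩ := exists_basis_smul_eq (Pi.basisFun R ι) i x
  refine ⟨GeneralLinearGroup.toLin.symm (.ofLinearEquiv b.equivFun), c, ?_⟩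
  rw [← mulVecLin_apply, ← GeneralLinearGroup.coe_toLin, MulEquiv.apply_symm_apply]
  ext j
  simp [Pi.single_apply, Finsupp.single_apply, eq_comm]

theorem exists_map_mulVec_eq_single {φ : R →+* T} {ψ : T →+* S}
    (hφψ : Function.Surjective (ψ.comp φ)) (i : ι) (v : ι → S) :
    ∃ (A : GL ι T) (c : S), (GeneralLinearGroup.map ψ A : Matrix ι ι S) *ᵥ v = Pi.single i c := by
  obtain ⟨x, rfl⟩ := hφψ.comp_left v
  obtain ⟨A, c, hA⟩ := exists_mulVec_eq_single i x
  refine ⟨GeneralLinearGroup.map φ A, ψ.comp φ c, ?_⟩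
  ext j
  calc ((A : Matrix ι ι R).map (ψ.comp φ) *ᵥ (ψ.comp φ ∘ x)) j
    _ = ψ.comp φ (((A : Matrix ι ι R) *ᵥ x) j) := ((ψ.comp φ).map_mulVec _ _ _).symm
    _ = (Pi.single i (ψ.comp φ c) : ι → S) j := by
      rw [hA, Pi.apply_single (fun _ ↦ ψ.comp φ) (fun _ ↦ map_zero _)]

end Reduction

section Transvection

variable {ι S T : Type*} [CommRing S] [CommRing T] [DecidableEq ι]

theorem map_transvection (ψ : T →+* S) (i j : ι) (c : T) :
    (transvection i j c).map ψ = transvection i j (ψ c) := by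
  simp [transvection, Matrix.map_add]

variable [Fintype ι]

theorem transvection_mulVec (i j : ι) (c : S) (v : ι → S) :
    transvection i j c *ᵥ v = v + Pi.single i (c * v j) := by
  rw [transvection, add_mulVec, one_mulVec, single_mulVec]
  rfl

theorem exists_map_mulVec_single_eq_single {ψ : T →+* S} (hψ : Function.Surjective ψ) {i j : ι}
    (hij : i ≠ j) {a b : S} (hab : a ∣ b) (hba : b ∣ a) :
    ∃ A : GL ι T, (GeneralLinearGroup.map ψ A : Matrix ι ι S) *ᵥ Pi.single i a = Pi.single j b := by
  obtain ⟨p', hp⟩ := hba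
  obtain ⟨q', hq⟩ := hab
  obtain ⟨p, rfl⟩ := hψ p'
  obtain ⟨q, rfl⟩ := hψ q'
  refine ⟨(SpecialLinearGroup.transvection hij (-p) * SpecialLinearGroup.transvection hij.symm q :
    SpecialLinearGroup ι T), ?_⟩
  calc (transvection i j (-p) * transvection j i q).map ψ *ᵥ Pi.single i a
    _ = transvection i j (-ψ p) *ᵥ (transvection j i (ψ q) *ᵥ Pi.single i a) := by
      rw [Matrix.map_mul, map_transvection, map_transvection, map_neg, mulVec_mulVec]
    _ = transvection i j (-ψ p) *ᵥ (Pi.single i a + Pi.single j b) := by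
      rw [transvection_mulVec j, Pi.single_eq_same, mul_comm, ← hq]
    _ = Pi.single j b := by
      rw [transvection_mulVec, add_right_comm, ← Pi.single_add]
      simp [hij, hp, mul_comm]

end Transvection

section Gcd

variable {m r : ℕ}

theorem dvd_val_iff_natCast_dvd {d : ℕ} (hd : d ∣ m) (a : ZMod m) :
    d ∣ a.val ↔ (d : ZMod m) ∣ a := by
  obtain rfl | hm := eq_or_ne m 0
  · exact Int.natCast_dvd.symm
  · have : NeZero m := ⟨hm⟩
    constructor
    · intro h
      simpa using Nat.cast_dvd_cast (α := ZMod m) h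
    · rintro ⟨b, rfl⟩
      rw [ZMod.val_mul, Nat.dvd_mod_iff hd, ZMod.val_natCast]
      exact ((Nat.dvd_mod_iff hd).mpr dvd_rfl).mul_right _

theorem exists_dvd_and_eq_span_natCast (I : Ideal (ZMod m)) :
    ∃ d : ℕ, d ∣ m ∧ I = Ideal.span {(d : ZMod m)} := by
  let π := Int.castRingHom (ZMod m)
  obtain ⟨z, hz⟩ := IsPrincipalIdealRing.principal (I.comap π)
  rw [Ideal.submodule_span_eq] at hz
  refine ⟨z.natAbs, ?_, ?_⟩
  · have hm : (m : ℤ) ∈ I.comap π := by simp [π]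
    rwa [hz, Ideal.mem_span_singleton, ← Int.natAbs_dvd, Int.natCast_dvd_natCast] at hm
  · rw [← Ideal.map_comap_of_surjective π ZMod.intCast_surjective I, hz, ← Int.span_natAbs,
      Ideal.map_span, image_singleton, map_natCast]

theorem dvd_gcdZMod_iff {d : ℕ} (x : Fin r → ZMod m) :
    d ∣ gcdZMod x ↔ d ∣ m ∧ Ideal.span (range x) ≤ Ideal.span {(d : ZMod m)} := by
  rw [gcdZMod, Nat.dvd_gcd_iff, Finset.dvd_gcd_iff, Ideal.span_le, range_subset_iff]
  refine and_congr_right fun hd ↦ ?_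
  simp [dvd_val_iff_natCast_dvd hd, Ideal.mem_span_singleton]

theorem span_natCast_gcdZMod (x : Fin r → ZMod m) :
    Ideal.span {(gcdZMod x : ZMod m)} = Ideal.span (range x) := by
  obtain ⟨d, hdm, hd⟩ := exists_dvd_and_eq_span_natCast (Ideal.span (range x))
  apply le_antisymm
  · rw [hd, Ideal.span_singleton_le_span_singleton]
    exact Nat.cast_dvd_cast ((dvd_gcdZMod_iff x).mpr ⟨hdm, hd.le⟩)
  · exact ((dvd_gcdZMod_iff x).mp dvd_rfl).2

theorem gcdZMod_eq_iff_span_range_eq {s : ℕ} {x : Fin r → ZMod m} {y : Fin s → ZMod m} :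
    gcdZMod x = gcdZMod y ↔ Ideal.span (range x) = Ideal.span (range y) := by
  refine ⟨fun h ↦ by rw [← span_natCast_gcdZMod x, h, span_natCast_gcdZMod], fun h ↦ ?_⟩
  exact Nat.dvd_left_iff_eq.mp fun d ↦ by rw [dvd_gcdZMod_iff, dvd_gcdZMod_iff, h]

end Gcd

theorem orbit_iff_gcd_eq_general {ι R S T : Type*} [Fintype ι] [DecidableEq ι] [Nontrivial ι]
    [CommRing R] [IsDomain R] [IsPrincipalIdealRing R] [CommRing S] [CommRing T]
    {φ : R →+* T} {ψ : T →+* S} (hφψ : Function.Surjective (ψ.comp φ)) (v w : ι → S) :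
    (∃ A : GL ι T, (GeneralLinearGroup.map ψ A : Matrix ι ι S) *ᵥ v = w) ↔
      Ideal.span (range v) = Ideal.span (range w) := by
  constructor
  · rintro ⟨A, rfl⟩
    exact (span_range_units_mulVec _ v).symm
  · intro h
    obtain ⟨i, j, hij⟩ := exists_pair_ne ι
    obtain ⟨A, a, hA⟩ := exists_map_mulVec_eq_single hφψ i v
    obtain ⟨B, b, hB⟩ := exists_map_mulVec_eq_single hφψ j w
    have hab : Ideal.span {a} = Ideal.span {b} := by
      rw [← span_range_single i, ← hA, span_range_units_mulVec, h, ← span_range_units_mulVec, hB,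
        span_range_single]
    obtain ⟨E, hE⟩ := exists_map_mulVec_single_eq_single (ψ := ψ) (.of_comp hφψ) hij
      (Ideal.span_singleton_le_span_singleton.mp hab.ge)
      (Ideal.span_singleton_le_span_singleton.mp hab.le)
    refine ⟨B⁻¹ * (E * A), ?_⟩
    simp only [map_mul, map_inv, Units.val_mul, ← mulVec_mulVec, hA, hE, ← hB]
    rw [mulVec_mulVec, Units.inv_mul, one_mulVec]

theorem orbit_iff_gcd_eq (r m t : ℕ) (hr : 2 ≤ r) (hmt : m ∣ t)
    (g h : Fin r → ZMod m) :
    (∃ A : Matrix.GeneralLinearGroup (Fin r) (ZMod t), glAction hmt A g = h) ↔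
      gcdZMod g = gcdZMod h := by
  have : Nontrivial (Fin r) := Fin.nontrivial_iff_two_le.mpr hr
  rw [gcdZMod_eq_iff_span_range_eq]
  exact orbit_iff_gcd_eq_general (φ := Int.castRingHom (ZMod t)) (ZMod.ringHom_surjective _) g h
end

section
/- Let m ≥ 1. For every r × t matrix A with entries in ZMod m, there exists an invertible matrix D ∈ GL_r(ℤ) such that the product D̄·A is in row echelon form, where D̄ denotes the image of D in Mat_r(ZMod m) under entrywise reduction mod m. -/
/-- A matrix is in row echelon form if (i) among any two nonzero rows, the leading
(first nonzero) entry of the upper row lies strictly to the left of the leading entry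
of the lower row, and (ii) every zero row lies below every nonzero row. -/
def IsRowEchelon {r t : ℕ} {R : Type*} [Zero R] (B : Matrix (Fin r) (Fin t) R) : Prop :=
  (∀ i i' : Fin r, i < i' → ∀ j j' : Fin t,
      (B i j ≠ 0 ∧ ∀ j₀, j₀ < j → B i j₀ = 0) →
      (B i' j' ≠ 0 ∧ ∀ j₀, j₀ < j' → B i' j₀ = 0) → j < j') ∧
  (∀ i i' : Fin r, i < i' → (∀ j, B i j = 0) → ∀ j, B i' j = 0)

/-! Clear the first column of a matrix over a Bézout domain `S` below its top entry by invertible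
row operations. If the top entry vanishes in the quotient `R`, so does the whole column, and it
remains to treat the other columns; otherwise that entry is a pivot, and it remains to treat the
lower right block. The row operations act on a lift of the matrix to `S`, since invertible matrices
over `R` need not lift to invertible matrices over `S`. -/

section RowEchelon

lemma isRowEchelon_of_matrix_isRowEchelon {r t : ℕ} {R : Type*} [Zero R]
    {B : Matrix (Fin r) (Fin t) R} (hB : B.IsRowEchelon) : IsRowEchelon B := by
  refine ⟨fun i i' hii' j j' hj hj' => ?_, fun i i' hii' hi => ?_⟩
  · by_contra! hle
    exact hj'.1 (hB hii' fun j₀ hj₀ => hj.2 j₀ (hj₀.trans_le hle))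
  · exact congrFun (hB.row_eq_zero_of_lt hii' (funext hi))

variable {t : ℕ} {R : Type*} [Zero R]

lemma matrix_isRowEchelon_of_col_zero {m : Type*} [LT m] {B : Matrix m (Fin (t + 1)) R}
    (hcol : ∀ i, B i 0 = 0) (hB : (B.submatrix id Fin.succ).IsRowEchelon) :
    B.IsRowEchelon := by
  intro i i' hii' j
  cases j using Fin.cases with
  | zero => exact fun _ => hcol i'
  | succ j => exact fun h => hB hii' fun j₀ hj₀ => h j₀.succ (Fin.succ_lt_succ_iff.mpr hj₀)

lemma matrix_isRowEchelon_of_pivot {r : ℕ} {B : Matrix (Fin (r + 1)) (Fin (t + 1)) R}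
    (hpivot : B 0 0 ≠ 0) (hcol : ∀ i : Fin r, B i.succ 0 = 0)
    (hB : (B.submatrix Fin.succ Fin.succ).IsRowEchelon) : B.IsRowEchelon := by
  intro i i' hii' j h
  obtain ⟨i', rfl⟩ := Fin.exists_succ_eq.mpr (Fin.ne_zero_of_lt hii')
  cases j using Fin.cases with
  | zero => exact hcol i'
  | succ j =>
    cases i using Fin.cases with
    | zero => exact absurd (h 0 j.succ_pos) hpivot
    | succ i =>
      exact hB (Fin.succ_lt_succ_iff.mp hii') fun j₀ hj₀ => h j₀.succ (Fin.succ_lt_succ_iff.mpr hj₀)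

end RowEchelon

section ExtendGL

open Matrix (GeneralLinearGroup)

variable {k n o R : Type*} [Fintype n] [DecidableEq n] [CommRing R]

lemma one_submatrix_id_mul (e : k → n) (A : Matrix n o R) :
    (1 : Matrix n n R).submatrix e id * A = A.submatrix e id :=
  Matrix.one_submatrix_mul e (Equiv.refl n) A

variable [Fintype k] [DecidableEq k]

/-- The invertible matrix acting as `G` on the coordinates in the image of `e` and as the identity
on all others. It is written as `1 + U (G - 1) Uᵀ`, where the columns of `U` are the standard basis
vectors indexed by `e`. -/
noncomputable def extendGL (e : k ↪ n) (G : GeneralLinearGroup k R) : GeneralLinearGroup n R :=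
  .mk'' (1 + (1 : Matrix n n R).submatrix id e *
      ((G.val - 1) * (1 : Matrix n n R).submatrix e id)) <| by
    rw [Matrix.det_one_add_mul_comm, Matrix.mul_assoc, one_submatrix_id_mul,
      Matrix.submatrix_submatrix, Function.id_comp, Function.comp_id,
      Matrix.submatrix_one_embedding, Matrix.mul_one, add_sub_cancel]
    exact G.isUnit.map Matrix.detMonoidHom

lemma extendGL_mul (e : k ↪ n) (G : GeneralLinearGroup k R) (A : Matrix n o R) :
    (extendGL e G).val * A =
      A + (1 : Matrix n n R).submatrix id e * ((G.val - 1) * A.submatrix e id) := by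
  simp only [extendGL, Matrix.GeneralLinearGroup.val_mk'', Matrix.add_mul, Matrix.one_mul,
    Matrix.mul_assoc, one_submatrix_id_mul]

lemma extendGL_mul_submatrix (e : k ↪ n) (G : GeneralLinearGroup k R) (A : Matrix n o R) :
    ((extendGL e G).val * A).submatrix e id = G.val * A.submatrix e id := by
  rw [extendGL_mul, Matrix.submatrix_add, Pi.add_apply, Pi.add_apply,
    Matrix.submatrix_mul _ _ e id id Function.bijective_id, Matrix.submatrix_submatrix,
    Function.id_comp, Function.comp_id, Matrix.submatrix_one_embedding, Matrix.one_mul,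
    Matrix.submatrix_id_id, Matrix.sub_mul, Matrix.one_mul, add_sub_cancel]

lemma extendGL_mul_apply_of_notMem_range (e : k ↪ n) (G : GeneralLinearGroup k R)
    (A : Matrix n o R) {i : n} (hi : i ∉ Set.range e) (j : o) :
    ((extendGL e G).val * A) i j = A i j := by
  have hU (a : k) : (1 : Matrix n n R).submatrix id e i a = 0 :=
    Matrix.one_apply_ne fun h => hi ⟨a, h.symm⟩
  rw [extendGL_mul, Matrix.add_apply, Matrix.mul_apply, add_eq_left]
  exact Finset.sum_eq_zero fun a _ => by rw [hU, zero_mul]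

end ExtendGL

section BezoutDomain

open Matrix (GeneralLinearGroup)

variable {S : Type*} [CommRing S] [IsDomain S] [IsBezout S]

lemma exists_gl_two_mul_add_mul_eq_zero (a b : S) :
    ∃ G : GeneralLinearGroup (Fin 2) S, G 1 0 * a + G 1 1 * b = 0 := by
  classical
  let := IsBezout.toGCDDomain S
  obtain ⟨a', b', ha, hb, hunit⟩ := extract_gcd a b
  have hcoprime : IsCoprime (-b') a' := ((gcd_isUnit_iff a' b').mp hunit).symm.neg_left
  obtain ⟨G, hG₀, hG₁⟩ := hcoprime.exists_SL2_row 1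
  refine ⟨G, ?_⟩
  change G 1 0 * a + G 1 1 * b = 0
  rw [hG₀, hG₁]
  linear_combination (-b') * ha + a' * hb

variable {n o : Type*} [Fintype n] [DecidableEq n]

lemma exists_gl_mul_apply_eq_zero_of_ne (A : Matrix n o S) {p i : n} (hpi : p ≠ i) (q : o) :
    ∃ D : GeneralLinearGroup n S,
      (D.val * A) i q = 0 ∧ ∀ l, l ≠ p → l ≠ i → ∀ j, (D.val * A) l j = A l j := by
  obtain ⟨G, hG⟩ := exists_gl_two_mul_add_mul_eq_zero (A p q) (A i q)
  let e : Fin 2 ↪ n := ⟨![p, i], by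
    simpa [Function.Injective, Fin.forall_fin_two, eq_comm] using hpi⟩
  refine ⟨extendGL e G, ?_, fun l hlp hli => extendGL_mul_apply_of_notMem_range e G A ?_⟩
  · calc ((extendGL e G).val * A) i q
        = (G.val * A.submatrix e id) 1 q := congrFun₂ (extendGL_mul_submatrix e G A) 1 q
      _ = G 1 0 * A p q + G 1 1 * A i q := by rw [Matrix.mul_apply, Fin.sum_univ_two]; rfl
      _ = 0 := hG
  · rintro ⟨a, rfl⟩
    fin_cases a
    exacts [hlp rfl, hli rfl]

lemma exists_gl_mul_apply_eq_zero (A : Matrix n o S) (p : n) (q : o) :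
    ∃ D : GeneralLinearGroup n S, ∀ i ≠ p, (D.val * A) i q = 0 := by
  suffices clear : ∀ s : Finset n, p ∉ s →
      ∃ D : GeneralLinearGroup n S, ∀ i ∈ s, (D.val * A) i q = 0 by
    obtain ⟨D, hD⟩ := clear (Finset.univ.erase p) (Finset.notMem_erase p _)
    exact ⟨D, fun i hi => hD i (Finset.mem_erase.mpr ⟨hi, Finset.mem_univ i⟩)⟩
  intro s hps
  induction s using Finset.induction_on with
  | empty => exact ⟨1, by simp⟩
  | insert i s his ih =>
    obtain ⟨hpi, hps⟩ := not_or.mp (Finset.mem_insert.not.mp hps)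
    obtain ⟨D, hD⟩ := ih hps
    obtain ⟨E, hE, hkeep⟩ := exists_gl_mul_apply_eq_zero_of_ne (D.val * A) hpi q
    refine ⟨E * D, fun l hl => ?_⟩
    rw [Units.val_mul, Matrix.mul_assoc]
    rcases Finset.mem_insert.mp hl with rfl | hls
    · exact hE
    · rw [hkeep l (ne_of_mem_of_not_mem hls hps) (ne_of_mem_of_not_mem hls his), hD l hls]

theorem exists_gl_mul_map_matrix_isRowEchelon {R : Type*} [NonAssocSemiring R] (f : S →+* R)
    {r t : ℕ} (A : Matrix (Fin r) (Fin t) S) :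
    ∃ D : GeneralLinearGroup (Fin r) S, ((D.val * A).map f).IsRowEchelon := by
  induction t generalizing r with
  | zero => exact ⟨1, fun _ _ _ j => j.elim0⟩
  | succ t ih =>
    cases r with
    | zero => exact ⟨1, fun i => i.elim0⟩
    | succ r =>
      obtain ⟨D, hD⟩ := exists_gl_mul_apply_eq_zero A 0 0
      set B := D.val * A with hB
      by_cases hpivot : f (B 0 0) = 0
      · have hcol (i : Fin (r + 1)) : f (B i 0) = 0 := by
          obtain rfl | hi := eq_or_ne i 0
          · exact hpivot
          · rw [hD i hi, map_zero]
        obtain ⟨E, hE⟩ := ih (B.submatrix id Fin.succ)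
        refine ⟨E * D, ?_⟩
        rw [Units.val_mul, Matrix.mul_assoc, ← hB]
        refine matrix_isRowEchelon_of_col_zero (fun i => ?_) hE
        simp [Matrix.mul_apply, hcol]
      · obtain ⟨E, hE⟩ := ih (B.submatrix Fin.succ Fin.succ)
        refine ⟨extendGL (Fin.succEmb r) E * D, ?_⟩
        rw [Units.val_mul, Matrix.mul_assoc, ← hB]
        have hbelow (i : Fin r) (j : Fin (t + 1)) :
            f (((extendGL (Fin.succEmb r) E).val * B) i.succ j) =
              f ((E.val * B.submatrix Fin.succ id) i j) :=
          congrArg f (congrFun₂ (extendGL_mul_submatrix (Fin.succEmb r) E B) i j)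
        refine matrix_isRowEchelon_of_pivot ?_ (fun i => ?_) ?_
        · rwa [Matrix.map_apply, extendGL_mul_apply_of_notMem_range (Fin.succEmb r) E B (by simp)]
        · rw [Matrix.map_apply, hbelow]
          simp [Matrix.mul_apply, hD]
        · convert hE using 1
          exact Matrix.ext fun i j => hbelow i j.succ

end BezoutDomain

theorem exists_gl_int_mul_isRowEchelon_zmod_general {S R : Type*} [CommRing S] [IsDomain S]
    [IsBezout S] [NonAssocSemiring R] (f : S →+* R) (hf : Function.Surjective f) {r t : ℕ}
    (A : Matrix (Fin r) (Fin t) R) :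
    ∃ D : Matrix.GeneralLinearGroup (Fin r) S,
      IsRowEchelon ((D : Matrix (Fin r) (Fin r) S).map f * A) := by
  choose lift hlift using hf
  obtain ⟨D, hD⟩ := exists_gl_mul_map_matrix_isRowEchelon f (A.map lift)
  refine ⟨D, isRowEchelon_of_matrix_isRowEchelon ?_⟩
  rwa [Matrix.map_mul, Matrix.map_map, show f ∘ lift = id from funext hlift, Matrix.map_id] at hD

theorem exists_gl_int_mul_isRowEchelon_zmod (r t m : ℕ) (hm : 1 ≤ m)
    (A : Matrix (Fin r) (Fin t) (ZMod m)) :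
    ∃ D : Matrix.GeneralLinearGroup (Fin r) ℤ,
      IsRowEchelon (((D : Matrix (Fin r) (Fin r) ℤ).map (Int.cast : ℤ → ZMod m)) * A) :=
  exists_gl_int_mul_isRowEchelon_zmod_general (Int.castRingHom (ZMod m)) ZMod.intCast_surjective A
end
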